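/- arXiv:2605.16709 — 2 statements merged into one kernel-verified Lean document; each statement's English description precedes it below -/
import Mathlib

section
/- Jensen–Shannon sum bound (converse of Corollary 2). For every integer V ≥ 2 and every vector q = (q_1,…,q_V) ∈ [0,1]^V, Σ_{1 ≤ i < j ≤ V} [ h₂((q_i + q_j)/2) − (h₂(q_i) + h₂(q_j))/2 ] ≤ ⌊V²/4⌋, with equality attained when q_i = 0 for ⌊V/2⌋ indices and q_i = 1 for the remaining ⌈V/2⌉ indices. Equivalently, for any binary U obtained from X by a stochastic map in the pair model, H(U|S) − H(U|X) ≤ ⌊V²/4⌋ / C(V,2). -/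
open Finset Filter Real

noncomputable section

open scoped Classical

/-- Pushforward of a mass function along a map. -/
def pushf {α β : Type*} [Fintype α] (p : α → ℝ) (f : α → β) : β → ℝ :=
  fun b => ∑ a, if f a = b then p a else 0

/-- Shannon entropy (in bits) of a mass function on a finite type,
with the convention `0 * logb 2 0 = 0`. -/
def ent {α : Type*} [Fintype α] (p : α → ℝ) : ℝ := -∑ a, p a * Real.logb 2 (p a)

/-- Shannon entropy (in bits) of a random variable `f` under the mass function `p`. -/
def entRV {α β : Type*} [Fintype α] [Fintype β] (p : α → ℝ) (f : α → β) : ℝ :=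
  ent (pushf p f)

/-- Mutual information `I(f; g)` (in bits) under the mass function `p`. -/
def mi {α β γ : Type*} [Fintype α] [Fintype β] [Fintype γ]
    (p : α → ℝ) (f : α → β) (g : α → γ) : ℝ :=
  entRV p f + entRV p g - entRV p (fun a => (f a, g a))

/-- Conditional mutual information `I(f; g | h)` (in bits) under the mass function `p`. -/
def cmi {α β γ δ : Type*} [Fintype α] [Fintype β] [Fintype γ] [Fintype δ]
    (p : α → ℝ) (f : α → β) (g : α → γ) (h : α → δ) : ℝ :=
  entRV p (fun a => (f a, h a)) + entRV p (fun a => (g a, h a))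
    - entRV p (fun a => (f a, g a, h a)) - entRV p h

/-- Conditional entropy `H(f | g)` (in bits) under the mass function `p`. -/
def condEnt {α β γ : Type*} [Fintype α] [Fintype β] [Fintype γ]
    (p : α → ℝ) (f : α → β) (g : α → γ) : ℝ :=
  entRV p (fun a => (f a, g a)) - entRV p g

/-- Total variation distance between two mass functions on a finite type. -/
def TV {α : Type*} [Fintype α] (p q : α → ℝ) : ℝ := (∑ a, |p a - q a|) / 2

/-- The binary entropy function (in bits), with `h2 0 = h2 1 = 0`. -/
def h2 (t : ℝ) : ℝ := -(t * Real.logb 2 t) - (1 - t) * Real.logb 2 (1 - t)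

/-!
Writing `η x = -x log x`, concavity of `η` on `{a, 2 * a, b, a + b}` for `a ≤ b` and the scaling of
`η` by `2` give `η ((a + b) / 2) - (η a + η b) / 2 ≤ log 2 * (b - a) / 2`. Adding this for `(a, b)`
and `(1 - a, 1 - b)` bounds the Jensen–Shannon divergence of two Bernoulli laws by `|a - b|`, with
equality for `a, b ∈ {0, 1}`. The sum of `|q i - q j|` over `i < j` is then bounded by removing the
smallest and the largest value, which costs at most `1` for that pair and for each other index.

For a Markov chain `S → X → U`, both conditional entropies are averages over `S`, so that
`H(U|S) - H(U|X)` is an average of Jensen–Shannon divergences; in the pair model these are the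
Bernoulli ones.
-/

section JensenShannon

lemma add_le_add_of_concaveOn {𝕜 β : Type*} [Field 𝕜] [LinearOrder 𝕜] [IsStrictOrderedRing 𝕜]
    [AddCommGroup β] [PartialOrder β] [IsOrderedAddMonoid β] [Module 𝕜 β]
    {s : Set 𝕜} {f : 𝕜 → β} (hf : ConcaveOn 𝕜 s f) {x y z w : 𝕜} (hx : x ∈ s) (hw : w ∈ s)
    (hxy : x ≤ y) (hxz : x ≤ z) (hsum : y + z = x + w) : f x + f w ≤ f y + f z := by
  obtain ⟨a, b, ha, hb, hab, hy⟩ : y ∈ segment 𝕜 x w := by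
    rw [segment_eq_Icc (by linarith)]
    exact ⟨hxy, by linarith⟩
  have hz : b • x + a • w = z := by
    simp only [smul_eq_mul] at hy ⊢
    linear_combination -hy - hsum + (x + w) * hab
  have hfy := hf.2 hx hw ha hb hab
  have hfz := hf.2 hx hw hb ha (by rw [add_comm, hab])
  rw [hy] at hfy
  rw [hz] at hfz
  calc f x + f w = (a • f x + b • f w) + (b • f x + a • f w) := by
        rw [add_add_add_comm, ← add_smul, ← add_smul, add_comm b a, hab, one_smul, one_smul]
    _ ≤ f y + f z := add_le_add hfy hfz

lemma negMulLog_half_add_sub_le {a b : ℝ} (ha : 0 ≤ a) (hb : 0 ≤ b) :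
    negMulLog ((a + b) / 2) - (negMulLog a + negMulLog b) / 2 ≤ log 2 * |a - b| / 2 := by
  wlog hab : a ≤ b generalizing a b
  · simpa only [add_comm, abs_sub_comm] using this hb ha (le_of_not_ge hab)
  have hconcave : negMulLog a + negMulLog (a + b) ≤ negMulLog (2 * a) + negMulLog b :=
    add_le_add_of_concaveOn concaveOn_negMulLog ha (add_nonneg ha hb)
      (by linarith) hab (by ring)
  have hscale (x : ℝ) : negMulLog (2 * x) = 2 * negMulLog x - log 2 * (2 * x) := by
    rw [negMulLog_mul, negMulLog]
    ring
  rw [show a + b = 2 * ((a + b) / 2) by ring, hscale, hscale] at hconcave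
  rw [abs_of_nonpos (sub_nonpos.2 hab)]
  linarith

lemma h2_eq_negMulLog_div (t : ℝ) : h2 t = (negMulLog t + negMulLog (1 - t)) / log 2 := by
  simp only [h2, logb, negMulLog]
  ring

/-- The Jensen–Shannon divergence, in bits, of the Bernoulli laws with means `a` and `b`. -/
def bernoulliJS (a b : ℝ) : ℝ := h2 ((a + b) / 2) - (h2 a + h2 b) / 2

lemma bernoulliJS_le_abs_sub {a b : ℝ} (ha : a ∈ Set.Icc 0 1) (hb : b ∈ Set.Icc 0 1) :
    bernoulliJS a b ≤ |a - b| := by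
  have h_success := negMulLog_half_add_sub_le ha.1 hb.1
  have h_failure := negMulLog_half_add_sub_le (sub_nonneg.2 ha.2) (sub_nonneg.2 hb.2)
  rw [show (1 - a + (1 - b)) / 2 = 1 - (a + b) / 2 by ring, sub_sub_sub_cancel_left,
    abs_sub_comm b a] at h_failure
  calc bernoulliJS a b
      = ((negMulLog ((a + b) / 2) - (negMulLog a + negMulLog b) / 2) +
          (negMulLog (1 - (a + b) / 2) - (negMulLog (1 - a) + negMulLog (1 - b)) / 2)) / log 2 := by
        simp only [bernoulliJS, h2_eq_negMulLog_div]
        ring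
    _ ≤ |a - b| := by
        rw [div_le_iff₀ (log_pos one_lt_two)]
        linarith

lemma bernoulliJS_eq_abs_sub {a b : ℝ} (ha : a = 0 ∨ a = 1) (hb : b = 0 ∨ b = 1) :
    bernoulliJS a b = |a - b| := by
  have h2_zero : h2 0 = 0 := by simp [h2]
  have h2_one : h2 1 = 0 := by simp [h2]
  have h2_half : h2 (1 / 2) = 1 := by norm_num [h2, logb_div]
  rcases ha with rfl | rfl <;> rcases hb with rfl | rfl <;>
    norm_num [bernoulliJS, h2_zero, h2_one, h2_half]

end JensenShannon

section AbsoluteDifferences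

lemma sq_div_four_eq_half_mul (n : ℕ) : n ^ 2 / 4 = n / 2 * (n - n / 2) := by
  rcases Nat.even_or_odd' n with ⟨k, rfl | rfl⟩
  · rw [show (2 * k) ^ 2 = 4 * (k * k) by ring, show 2 * k - 2 * k / 2 = k by lia]
    simp
  · rw [show (2 * k + 1) ^ 2 = 1 + 4 * (k * (k + 1)) by ring, Nat.add_mul_div_left _ _ four_pos,
      show (2 * k + 1) / 2 = k by lia, show 2 * k + 1 - k = k + 1 by lia]
    simp

lemma add_two_sq_div_four (n : ℕ) : (n + 2) ^ 2 / 4 = n ^ 2 / 4 + (n + 1) := by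
  rw [show (n + 2) ^ 2 = n ^ 2 + 4 * (n + 1) by ring, Nat.add_mul_div_left _ _ four_pos]

lemma exists_eq_insert_min_insert_max {ι α : Type*} [DecidableEq ι] [LinearOrder α] {q : ι → α}
    {S : Finset ι} (hS : 1 < #S) :
    ∃ (m M : ι) (T : Finset ι), m ∉ insert M T ∧ M ∉ T ∧ S = insert m (insert M T) ∧ q m ≤ q M ∧
      ∀ k ∈ T, q k ∈ Set.Icc (q m) (q M) := by
  obtain ⟨m, hm, hmin⟩ := S.exists_min_image q (card_pos.1 (zero_lt_one.trans hS))
  obtain ⟨M, hM, hmax⟩ := (S.erase m).exists_max_image q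
    ((erase_nonempty hm).2 (one_lt_card_iff_nontrivial.1 hS))
  refine ⟨m, M, (S.erase m).erase M, ?_, notMem_erase M _, ?_, hmin M (mem_of_mem_erase hM),
    fun k hk => ⟨hmin k (mem_of_mem_erase (mem_of_mem_erase hk)), hmax k (mem_of_mem_erase hk)⟩⟩
  · rw [insert_erase hM]
    exact notMem_erase m S
  · rw [insert_erase hM, insert_erase hm]

variable {ι R : Type*} [CommRing R] [LinearOrder R] [IsStrictOrderedRing R]

lemma sum_sum_abs_sub_insert_insert [DecidableEq ι] {q : ι → R} {T : Finset ι} {m M : ι}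
    (hm : m ∉ insert M T) (hM : M ∉ T) (hmM : q m ≤ q M) (hT : ∀ k ∈ T, q k ∈ Set.Icc (q m) (q M)) :
    ∑ i ∈ insert m (insert M T), ∑ j ∈ insert m (insert M T), |q i - q j| =
      ∑ i ∈ T, ∑ j ∈ T, |q i - q j| + 2 * (#T + 1) * (q M - q m) := by
  have hends : ∑ k ∈ T, |q m - q k| + ∑ k ∈ T, |q M - q k| = #T * (q M - q m) := by
    rw [← sum_add_distrib, ← nsmul_eq_mul, ← sum_const]
    refine sum_congr rfl fun k hk => ?_
    rw [abs_of_nonpos (sub_nonpos.2 (hT k hk).1), abs_of_nonneg (sub_nonneg.2 (hT k hk).2)]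
    ring
  have hsymm (x : ι) : ∑ k ∈ T, |q k - q x| = ∑ k ∈ T, |q x - q k| :=
    sum_congr rfl fun k _ => abs_sub_comm _ _
  simp only [sum_insert hm, sum_insert hM, sum_add_distrib, hsymm m, hsymm M, sub_self, abs_zero]
  rw [abs_sub_comm (q M), abs_of_nonpos (sub_nonpos.2 hmM)]
  linear_combination 2 * hends

lemma sum_sum_abs_sub_le {q : ι → R} {a b : R} (S : Finset ι) (hq : ∀ i ∈ S, q i ∈ Set.Icc a b) :
    ∑ i ∈ S, ∑ j ∈ S, |q i - q j| ≤ 2 * (#S ^ 2 / 4 : ℕ) * (b - a) := by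
  classical
  induction S using Finset.strongInduction with | H S ih
  rcases le_or_gt #S 1 with hS | hS
  · have hzero : ∑ i ∈ S, ∑ j ∈ S, |q i - q j| = 0 :=
      sum_eq_zero fun i hi => sum_eq_zero fun j hj => by simp [card_le_one.1 hS i hi j hj]
    have hcard : #S ^ 2 / 4 = 0 := by interval_cases #S <;> rfl
    simp [hzero, hcard]
  obtain ⟨m, M, T, hm, hM, rfl, hmM, hT⟩ := exists_eq_insert_min_insert_max (q := q) hS
  have hTS : T ⊂ insert m (insert M T) := (ssubset_insert hM).trans (ssubset_insert hm)
  have hwidth : q M - q m ≤ b - a := sub_le_sub (hq M (by simp)).2 (hq m (by simp)).1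
  calc _ = ∑ i ∈ T, ∑ j ∈ T, |q i - q j| + 2 * (#T + 1) * (q M - q m) :=
        sum_sum_abs_sub_insert_insert hm hM hmM hT
    _ ≤ 2 * (#T ^ 2 / 4 : ℕ) * (b - a) + 2 * (#T + 1) * (b - a) := by
        gcongr
        exact ih T hTS fun i hi => hq i (hTS.subset hi)
    _ = 2 * (#(insert m (insert M T)) ^ 2 / 4 : ℕ) * (b - a) := by
        rw [card_insert_of_notMem hm, card_insert_of_notMem hM, add_two_sq_div_four]
        push_cast
        ring

lemma sum_sum_abs_sub_ite_mem [Fintype ι] [DecidableEq ι] (A : Finset ι) :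
    ∑ i, ∑ j, |(if i ∈ A then (0 : R) else 1) - (if j ∈ A then 0 else 1)| = 2 * (#A * #Aᶜ) := by
  have hterm (i j : ι) : |(if i ∈ A then (0 : R) else 1) - (if j ∈ A then 0 else 1)| =
      (if i ∈ A then 1 else 0) * (if j ∈ Aᶜ then 1 else 0) +
        (if i ∈ Aᶜ then 1 else 0) * (if j ∈ A then 1 else 0) := by
    by_cases hi : i ∈ A <;> by_cases hj : j ∈ A <;> simp [hi, hj]
  simp only [hterm, sum_add_distrib, ← mul_sum, ← sum_mul, sum_boole, filter_mem_eq_inter,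
    univ_inter]
  ring

end AbsoluteDifferences

section PairSums

variable {ι : Type*} [Fintype ι] [LinearOrder ι]

lemma two_nsmul_sum_sum_ite_lt {M : Type*} [AddCommMonoid M] {f : ι → ι → M}
    (hsymm : ∀ i j, f i j = f j i) (hdiag : ∀ i, f i i = 0) :
    2 • (∑ i, ∑ j, if i < j then f i j else 0) = ∑ i, ∑ j, f i j := by
  have hsplit (i j : ι) : f i j = (if i < j then f i j else 0) + (if j < i then f j i else 0) := by
    rcases lt_trichotomy i j with h | rfl | h
    · simp [h, h.not_gt]
    · simp [hdiag]
    · simp [h, h.not_gt, hsymm i j]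
  calc 2 • (∑ i, ∑ j, if i < j then f i j else 0)
      = (∑ i, ∑ j, if i < j then f i j else 0) + ∑ i, ∑ j, if j < i then f j i else 0 := by
        rw [two_nsmul, sum_comm (f := fun i j => if j < i then f j i else 0)]
    _ = ∑ i, ∑ j, f i j := by
        simp only [← sum_add_distrib, ← hsplit]

lemma sum_card_eq_two_eq_sum_sum_ite_lt {M : Type*} [AddCommMonoid M] (f : Finset ι → M) :
    ∑ s : {s : Finset ι // s.card = 2}, f s = ∑ i, ∑ j, if i < j then f {i, j} else 0 := by
  rw [← sum_product', ← sum_filter]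
  symm
  refine sum_bij (fun x hx => ⟨{x.1, x.2}, card_pair (mem_filter.1 hx).2.ne⟩)
    (fun _ _ => mem_univ _) ?_ ?_ fun _ _ => rfl
  · rintro ⟨a, b⟩ hab ⟨c, d⟩ hcd h
    simp only [mem_filter, Subtype.mk.injEq] at hab hcd h
    have ha : a ∈ ({c, d} : Finset ι) := h ▸ mem_insert_self a {b}
    have hb : b ∈ ({c, d} : Finset ι) := h ▸ mem_insert_of_mem (mem_singleton_self b)
    grind
  · rintro ⟨s, hs⟩ -
    obtain ⟨x, y, hxy, rfl⟩ := card_eq_two.1 hs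
    rcases hxy.lt_or_gt with h | h
    · exact ⟨(x, y), by simp [h], rfl⟩
    · exact ⟨(y, x), by simp [h], by simp [pair_comm]⟩

lemma sum_bernoulliJS_le {q : ι → ℝ} (hq : ∀ i, q i ∈ Set.Icc 0 1) :
    (∑ i, ∑ j, if i < j then bernoulliJS (q i) (q j) else 0) ≤ (Fintype.card ι ^ 2 / 4 : ℕ) := by
  have habs : ∑ i, ∑ j, |q i - q j| ≤ 2 * (Fintype.card ι ^ 2 / 4 : ℕ) * (1 - 0) :=
    sum_sum_abs_sub_le univ fun i _ => hq i
  rw [← two_nsmul_sum_sum_ite_lt (fun i j => abs_sub_comm (q i) (q j)) (by simp), nsmul_eq_mul]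
    at habs
  calc (∑ i, ∑ j, if i < j then bernoulliJS (q i) (q j) else 0)
      ≤ ∑ i, ∑ j, if i < j then |q i - q j| else 0 := by
        gcongr with i _ j _
        split_ifs
        exacts [bernoulliJS_le_abs_sub (hq i) (hq j), le_rfl]
    _ ≤ (Fintype.card ι ^ 2 / 4 : ℕ) := by
        push_cast at habs
        linarith

lemma sum_bernoulliJS_ite_mem (A : Finset ι) :
    (∑ i, ∑ j, if i < j then
      bernoulliJS (if i ∈ A then 0 else 1) (if j ∈ A then 0 else 1) else 0) = #A * #Aᶜ := by
  have hbit (i : ι) : (if i ∈ A then (0 : ℝ) else 1) = 0 ∨ (if i ∈ A then (0 : ℝ) else 1) = 1 := by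
    split_ifs <;> simp
  simp only [fun i j => bernoulliJS_eq_abs_sub (hbit i) (hbit j)]
  have habs := sum_sum_abs_sub_ite_mem (R := ℝ) A
  rw [← two_nsmul_sum_sum_ite_lt (fun i j => abs_sub_comm _ _) (by simp), nsmul_eq_mul] at habs
  push_cast at habs
  linarith

end PairSums

section ConditionalEntropy

lemma mul_mul_logb_mul (b x y : ℝ) :
    x * y * logb b (x * y) = y * (x * logb b x) + x * (y * logb b y) := by
  rcases eq_or_ne x 0 with rfl | hx
  · simp
  rcases eq_or_ne y 0 with rfl | hy
  · simp
  rw [logb_mul hx hy]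
  ring

variable {σ α β : Type*} [Fintype α] [Fintype β]

lemma sum_pushf_prodMk {γ : Type*} (p : α → ℝ) (f : α → β) (g : α → γ) (c : γ) :
    ∑ b, pushf p (fun a => (f a, g a)) (b, c) = pushf p g c := by
  simp only [pushf, Prod.mk.injEq, ite_and]
  rw [sum_comm]
  simp

lemma condEnt_eq_sum_mul_ent {γ : Type*} [Fintype γ] {p : α → ℝ} {f : α → β} {g : α → γ}
    {w : γ → ℝ} {κ : γ → β → ℝ}
    (hp : ∀ b c, pushf p (fun a => (f a, g a)) (b, c) = w c * κ c b) (hκ : ∀ c, ∑ b, κ c b = 1) :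
    condEnt p f g = ∑ c, w c * ent (κ c) := by
  have hg (c : γ) : pushf p g c = w c := by
    rw [← sum_pushf_prodMk p f g c]
    simp only [hp, ← mul_sum, hκ, mul_one]
  simp only [condEnt, entRV, ent, Fintype.sum_prod_type_right, hp, hg, mul_mul_logb_mul,
    sum_add_distrib, ← sum_mul, ← mul_sum, hκ, one_mul, mul_neg, sum_neg_distrib]
  ring

/-- The joint mass function of a Markov chain `S → X → U` with initial law `w`, in which `ν` is the
transition from `S` to `X` and `κ` the one from `X` to `U`. -/
def chainLaw (w : σ → ℝ) (ν : σ → α → ℝ) (κ : α → β → ℝ) : σ × α × β → ℝ :=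
  fun z => w z.1 * ν z.1 z.2.1 * κ z.2.1 z.2.2

variable [Fintype σ] {w : σ → ℝ} {ν : σ → α → ℝ} {κ : α → β → ℝ}

lemma condEnt_chainLaw_fst (hν : ∀ s, ∑ x, ν s x = 1) (hκ : ∀ x, ∑ u, κ x u = 1) :
    condEnt (chainLaw w ν κ) (fun z => z.2.2) (fun z => z.1) =
      ∑ s, w s * ent (fun u => ∑ x, ν s x * κ x u) := by
  refine condEnt_eq_sum_mul_ent (fun u s => ?_) fun s => ?_
  · simp [pushf, chainLaw, Fintype.sum_prod_type, ite_and, mul_sum, mul_assoc]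
  · rw [sum_comm]
    simp only [← mul_sum, hκ, mul_one, hν]

lemma condEnt_chainLaw_snd (hκ : ∀ x, ∑ u, κ x u = 1) :
    condEnt (chainLaw w ν κ) (fun z => z.2.2) (fun z => z.2.1) =
      ∑ s, w s * ∑ x, ν s x * ent (κ x) := by
  rw [condEnt_eq_sum_mul_ent (w := fun x => ∑ s, w s * ν s x) (κ := κ) (fun u x => ?_) hκ]
  · simp only [sum_mul, mul_sum, mul_assoc]
    exact sum_comm
  · simp [pushf, chainLaw, Fintype.sum_prod_type, ite_and, sum_mul]

end ConditionalEntropy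

section PairModel

/-- The Bernoulli mass function with mean `t`. -/
def bernoulliMass (t : ℝ) : Bool → ℝ := fun u => if u then t else 1 - t

lemma sum_bernoulliMass (t : ℝ) : ∑ u, bernoulliMass t u = 1 := by
  simp [bernoulliMass]

lemma ent_bernoulliMass (t : ℝ) : ent (bernoulliMass t) = h2 t := by
  simp only [ent, bernoulliMass, Fintype.sum_bool, if_true, Bool.false_eq_true, if_false, h2]
  ring

lemma sum_mul_bernoulliMass {α : Type*} [Fintype α] {ν : α → ℝ} (hν : ∑ x, ν x = 1) (q : α → ℝ) :
    (fun u => ∑ x, ν x * bernoulliMass (q x) u) = bernoulliMass (∑ x, ν x * q x) := by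
  ext u
  cases u <;> simp [bernoulliMass, mul_sub, hν]

lemma condEnt_sub_condEnt_chainLaw_bernoulliMass {σ α : Type*} [Fintype σ] [Fintype α]
    {w : σ → ℝ} {ν : σ → α → ℝ} (hν : ∀ s, ∑ x, ν s x = 1) (q : α → ℝ) :
    condEnt (chainLaw w ν fun x => bernoulliMass (q x)) (fun z => z.2.2) (fun z => z.1) -
        condEnt (chainLaw w ν fun x => bernoulliMass (q x)) (fun z => z.2.2) (fun z => z.2.1) =
      ∑ s, w s * (h2 (∑ x, ν s x * q x) - ∑ x, ν s x * h2 (q x)) := by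
  rw [condEnt_chainLaw_fst hν fun x => sum_bernoulliMass (q x),
    condEnt_chainLaw_snd fun x => sum_bernoulliMass (q x)]
  simp only [fun s => sum_mul_bernoulliMass (hν s) q, ent_bernoulliMass, mul_sub, sum_sub_distrib]

variable {ι : Type*} [Fintype ι]

/-- The uniform mass function on a two-element set. -/
def pairMass [DecidableEq ι] (s : {s : Finset ι // s.card = 2}) : ι → ℝ :=
  fun x => if x ∈ s.val then 1 / 2 else 0

lemma sum_pairMass_mul [DecidableEq ι] (s : {s : Finset ι // s.card = 2}) (f : ι → ℝ) :
    ∑ x, pairMass s x * f x = (∑ x ∈ s.val, f x) / 2 := by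
  simp only [pairMass, ite_mul, zero_mul, sum_ite_mem, univ_inter, ← mul_sum]
  ring

lemma sum_pairMass [DecidableEq ι] (s : {s : Finset ι // s.card = 2}) : ∑ x, pairMass s x = 1 := by
  simpa [s.property] using sum_pairMass_mul s 1

lemma condEnt_sub_condEnt_chainLaw_pairMass [LinearOrder ι] (c : ℝ) (q : ι → ℝ) :
    condEnt (chainLaw (fun _ => c) pairMass fun x => bernoulliMass (q x))
          (fun z => z.2.2) (fun z => z.1) -
        condEnt (chainLaw (fun _ => c) pairMass fun x => bernoulliMass (q x))
          (fun z => z.2.2) (fun z => z.2.1) =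
      c * ∑ i, ∑ j, if i < j then bernoulliJS (q i) (q j) else 0 := by
  rw [condEnt_sub_condEnt_chainLaw_bernoulliMass sum_pairMass, ← mul_sum]
  simp only [sum_pairMass_mul]
  rw [sum_card_eq_two_eq_sum_sum_ite_lt fun s => h2 ((∑ x ∈ s, q x) / 2) - (∑ x ∈ s, h2 (q x)) / 2]
  refine congrArg (c * ·) (sum_congr rfl fun i _ => sum_congr rfl fun j _ => ?_)
  refine ite_congr rfl (fun hij => ?_) fun _ => rfl
  rw [sum_pair hij.ne, sum_pair hij.ne, bernoulliJS]

end PairModel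

/-- **Jensen–Shannon sum bound (converse of Corollary 2).**  For every `V ≥ 2` and every
`q ∈ [0,1]^V`, `Σ_{i<j} [h₂((qᵢ+qⱼ)/2) − (h₂(qᵢ)+h₂(qⱼ))/2] ≤ ⌊V²/4⌋`, with equality
attained when `qᵢ = 0` on a set of `⌊V/2⌋` indices and `qᵢ = 1` on the remaining
`⌈V/2⌉` indices.  Equivalently, for any binary `U` obtained from `X` by a stochastic
map in the pair model, `H(U|S) − H(U|X) ≤ ⌊V²/4⌋ / C(V,2)`. -/
theorem js_sum_bound (V : ℕ) (hV : 2 ≤ V)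
    (q : Fin V → ℝ) (hq0 : ∀ i, 0 ≤ q i) (hq1 : ∀ i, q i ≤ 1) :
    (∑ i : Fin V, ∑ j : Fin V,
        if i < j then h2 ((q i + q j) / 2) - (h2 (q i) + h2 (q j)) / 2 else 0)
      ≤ ((V ^ 2 / 4 : ℕ) : ℝ) ∧
    (∀ A : Finset (Fin V), A.card = V / 2 →
      (∑ i : Fin V, ∑ j : Fin V,
          if i < j then
            h2 (((if i ∈ A then (0 : ℝ) else 1) + (if j ∈ A then (0 : ℝ) else 1)) / 2)
              - (h2 (if i ∈ A then (0 : ℝ) else 1) + h2 (if j ∈ A then (0 : ℝ) else 1)) / 2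
          else 0)
        = ((V ^ 2 / 4 : ℕ) : ℝ)) ∧
    -- equivalently, in the pair model with U drawn from X via q:
    (let p : {s : Finset (Fin V) // s.card = 2} × Fin V × Bool → ℝ :=
      fun z => (if z.2.1 ∈ z.1.val then 1 / ((V.choose 2 : ℝ) * 2) else 0) *
        (if z.2.2 then q z.2.1 else 1 - q z.2.1)
    let Urv : {s : Finset (Fin V) // s.card = 2} × Fin V × Bool → Bool := fun z => z.2.2
    let Xrv : {s : Finset (Fin V) // s.card = 2} × Fin V × Bool → Fin V := fun z => z.2.1
    let Srv : {s : Finset (Fin V) // s.card = 2} × Fin V × Bool →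
        {s : Finset (Fin V) // s.card = 2} := fun z => z.1
    condEnt p Urv Srv - condEnt p Urv Xrv ≤ ((V ^ 2 / 4 : ℕ) : ℝ) / (V.choose 2 : ℝ)) := by
  have hbound := sum_bernoulliJS_le fun i => ⟨hq0 i, hq1 i⟩
  rw [Fintype.card_fin] at hbound
  refine ⟨hbound, fun A hA => ?_, ?_⟩
  · have hsum := sum_bernoulliJS_ite_mem A
    rwa [card_compl, Fintype.card_fin, hA, ← Nat.cast_mul, ← sq_div_four_eq_half_mul] at hsum
  · intro p Urv Xrv Srv
    have hp : p = chainLaw (fun _ => 1 / (V.choose 2 : ℝ)) pairMass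
        fun x => bernoulliMass (q x) := by
      funext z
      simp only [p, chainLaw, pairMass, bernoulliMass, mul_ite, mul_zero, one_div, mul_inv]
    rw [hp, condEnt_sub_condEnt_chainLaw_pairMass, one_div_mul_eq_div]
    gcongr
end
end

section
/- Soft-covering lemma (expectation version). Let U, X be finite sets, P_U a pmf on U, and W_{X|U} a conditional pmf; let P_X(x) = Σ_u P_U(u) W_{X|U}(x|u) and let I(U;X) be the mutual information under the joint pmf P_U · W_{X|U}. For each n, let C_n = (U^n(1), …, U^n(N_n)) with N_n = ⌈2^{nR}⌉ be a random codebook whose codewords are drawn independently, each from P_U^{⊗n}, and let P̂_{X^n}(x^n) = (1/N_n) Σ_{i=1}^{N_n} ∏_{t=1}^n W_{X|U}(x_t | U_t(i)) be the (codebook-dependent) induced output pmf. If R > I(U;X), then there exists σ > 0 such that for all sufficiently large n, E_{C_n}[ V(P̂_{X^n}, P_X^{⊗n}) ] ≤ e^{−nσ}. -/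
open Finset Filter Real

noncomputable section

open scoped Classical

/-!
Let `m x` be the target output probability of `x` and `Y x` its value under the random codebook of
`N` codewords, so that `E (Y x) = m x`.  By Cauchy–Schwarz, the squared total variation distance is
at most half of `∑ x, (Y x - m x) ^ 2 / (Y x + m x)`, and each term equals
`Y x + m x - 4 * m x * (Y x / (Y x + m x))`.  In `E (Y x / (Y x + m x))` the numerator is an average
over the codewords; conditioning on the one that is picked raises the mean of `Y x` by at most
`W(x|u) / N`, so Jensen's inequality for `1 / (Y x + m x)` and `r / (r + 2) ≤ r ^ s` for
`0 ≤ s ≤ 1` bound the expected squared distance by `E[(W(X|U) / P_X(X)) ^ s] / N ^ s`.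

On blocks of length `n` the moment is an `n`-th power.  Its one-letter value is `1` at `s = 0`, with
derivative `I(U;X) * log 2`, so it is below `2 ^ (R * s)` for small `s > 0` as soon as `R > I(U;X)`.
-/

/-- The product of the mass functions `p i`: the law of a tuple of independent letters.  An i.i.d.
block, a random codebook and the rows of a memoryless channel are all of this form. -/
def piMass {ι A : Type*} [Fintype ι] (p : ι → A → ℝ) : (ι → A) → ℝ := fun a => ∏ i, p i (a i)

/-- The channel on blocks that acts on the `t`-th letter by `W t`, without memory. -/
def piChannel {ι A B : Type*} [Fintype ι] (W : ι → A → B → ℝ) : (ι → A) → (ι → B) → ℝ :=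
  fun a => piMass fun t => W t (a t)

/-- The joint mass function of an input with law `p` and its output under the channel `W`. -/
def jointMass {A B : Type*} (p : A → ℝ) (W : A → B → ℝ) : A × B → ℝ := fun z => p z.1 * W z.1 z.2

/-- The output marginal of the channel `W` under the input law `p`. -/
def outputMass {A B : Type*} [Fintype A] (p : A → ℝ) (W : A → B → ℝ) : B → ℝ :=
  fun b => ∑ a, p a * W a b

/-- The empirical mean of `f` along the sample `c`. -/
def sampleMean {A : Type*} {N : ℕ} (f : A → ℝ) (c : Fin N → A) : ℝ := 1 / (N : ℝ) * ∑ i, f (c i)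

/-- The output mass function of the channel `W` fed with a uniformly chosen codeword of `c`. -/
def codebookMass {A B : Type*} {N : ℕ} (W : A → B → ℝ) (c : Fin N → A) : B → ℝ :=
  fun b => sampleMean (W · b) c

/-- The triangular discrimination (Vincze–Le Cam distance) of two mass functions.  Letters of mass
zero under both contribute `0 / 0 = 0`. -/
def triangularDisc {B : Type*} [Fintype B] (P Q : B → ℝ) : ℝ := ∑ b, (P b - Q b) ^ 2 / (P b + Q b)

/-- The exponential moment `E[(W(X|U) / P_X(X)) ^ s]` of the information density, which is
`exp (s * D)` for the Rényi divergence `D` (in nats) of order `1 + s` of the joint law from the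
product of its marginals. -/
def renyiMoment {A B : Type*} [Fintype A] [Fintype B] (p : A → ℝ) (W : A → B → ℝ) (s : ℝ) : ℝ :=
  ∑ b, ∑ a, p a * W a b * (W a b / outputMass p W b) ^ s

section Product

variable {ι A B : Type*} [Fintype ι] [DecidableEq ι] [Fintype A]

lemma sum_piMass (p : ι → A → ℝ) : ∑ a, piMass p a = ∏ i, ∑ a, p i a := by
  simpa [piMass] using Finset.sum_prod_piFinset univ p

lemma piMass_mem_stdSimplex {p : ι → A → ℝ} (hp : ∀ i, p i ∈ stdSimplex ℝ A) :
    piMass p ∈ stdSimplex ℝ (ι → A) :=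
  ⟨fun a => prod_nonneg fun i _ => (hp i).1 (a i), by simp [sum_piMass, (hp _).2]⟩

lemma sum_piMass_mul_prod {p : ι → A → ℝ} (hp : ∀ i, ∑ a, p i a = 1) (s : Finset ι)
    (g : ι → A → ℝ) :
    ∑ a, piMass p a * ∏ i ∈ s, g i (a i) = ∏ i ∈ s, ∑ a, p i a * g i a := by
  calc ∑ a, piMass p a * ∏ i ∈ s, g i (a i)
      = ∑ a, piMass (fun i x => p i x * if i ∈ s then g i x else 1) a := by
        simp only [piMass, prod_mul_distrib, prod_ite_mem, univ_inter]
    _ = ∏ i, if i ∈ s then ∑ a, p i a * g i a else 1 := by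
        rw [sum_piMass]
        refine prod_congr rfl fun i _ => ?_
        split_ifs <;> simp [hp]
    _ = ∏ i ∈ s, ∑ a, p i a * g i a := by simp

lemma sum_piMass_mul_apply {p : ι → A → ℝ} (hp : ∀ i, ∑ a, p i a = 1) (j : ι) (g : A → ℝ) :
    ∑ a, piMass p a * g (a j) = ∑ a, p j a * g a := by
  simpa using sum_piMass_mul_prod hp {j} fun _ => g

lemma sum_piMass_mul_apply_mul_apply {p : ι → A → ℝ} (hp : ∀ i, ∑ a, p i a = 1) {j l : ι}
    (hjl : j ≠ l) (g h : A → ℝ) :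
    ∑ a, piMass p a * (g (a j) * h (a l)) = (∑ a, p j a * g a) * ∑ a, p l a * h a := by
  simpa [prod_pair hjl, hjl.symm] using
    sum_piMass_mul_prod hp {j, l} fun i => if i = j then g else h

lemma outputMass_piChannel (p : ι → A → ℝ) (W : ι → A → B → ℝ) :
    outputMass (piMass p) (piChannel W) = piMass fun t => outputMass (p t) (W t) := by
  ext b
  simpa [outputMass, piChannel, piMass, prod_mul_distrib] using
    sum_piMass fun t a => p t a * W t a (b t)

end Product

section Channel

variable {A B : Type*} [Fintype A] {p : A → ℝ} {W : A → B → ℝ}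

lemma outputMass_nonneg (hp : ∀ a, 0 ≤ p a) (hW : ∀ a b, 0 ≤ W a b) (b : B) :
    0 ≤ outputMass p W b :=
  sum_nonneg fun a _ => mul_nonneg (hp a) (hW a b)

lemma outputMass_pos (hp : ∀ a, 0 ≤ p a) (hW : ∀ a b, 0 ≤ W a b) {a : A} {b : B}
    (hab : p a * W a b ≠ 0) : 0 < outputMass p W b :=
  sum_pos' (fun a _ => mul_nonneg (hp a) (hW a b))
    ⟨a, mem_univ a, (mul_nonneg (hp a) (hW a b)).lt_of_ne' hab⟩

variable [Fintype B]

lemma outputMass_mem_stdSimplex (hp : p ∈ stdSimplex ℝ A) (hW : ∀ a, W a ∈ stdSimplex ℝ B) :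
    outputMass p W ∈ stdSimplex ℝ B := by
  refine ⟨outputMass_nonneg hp.1 fun a => (hW a).1, ?_⟩
  simp only [outputMass]
  rw [sum_comm]
  simp [← mul_sum, (hW _).2, hp.2]

lemma renyiMoment_nonneg (hp : ∀ a, 0 ≤ p a) (hW : ∀ a b, 0 ≤ W a b) (s : ℝ) :
    0 ≤ renyiMoment p W s :=
  sum_nonneg fun b _ => sum_nonneg fun a _ => mul_nonneg (mul_nonneg (hp a) (hW a b))
    (rpow_nonneg (div_nonneg (hW a b) (outputMass_nonneg hp hW b)) s)

lemma renyiMoment_zero (hp : p ∈ stdSimplex ℝ A) (hW : ∀ a, W a ∈ stdSimplex ℝ B) :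
    renyiMoment p W 0 = 1 := by
  simpa [renyiMoment, outputMass] using (outputMass_mem_stdSimplex hp hW).2

lemma renyiMoment_piChannel {ι : Type*} [Fintype ι] [DecidableEq ι] {p : ι → A → ℝ}
    {W : ι → A → B → ℝ} (hp : ∀ t a, 0 ≤ p t a) (hW : ∀ t a b, 0 ≤ W t a b) (s : ℝ) :
    renyiMoment (piMass p) (piChannel W) s = ∏ t, renyiMoment (p t) (W t) s := by
  have hterm (b : ι → B) (a : ι → A) :
      piMass p a * piChannel W a b *
          (piChannel W a b / outputMass (piMass p) (piChannel W) b) ^ s =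
        ∏ t, p t (a t) * W t (a t) (b t) *
          (W t (a t) (b t) / outputMass (p t) (W t) (b t)) ^ s := by
    rw [outputMass_piChannel]
    simp only [piChannel, piMass, prod_mul_distrib, ← prod_div_distrib]
    rw [finsetProd_rpow _ _ fun t _ =>
      div_nonneg (hW t _ _) (outputMass_nonneg (hp t) (hW t) _)]
  simp only [renyiMoment, hterm]
  rw [← sum_piMass]
  refine sum_congr rfl fun b _ => ?_
  exact sum_piMass fun t a => p t a * W t a (b t) * (W t a (b t) / outputMass (p t) (W t) (b t)) ^ s

end Channel

open scoped Topology in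
lemma exists_lt_of_hasDerivAt_lt {f g : ℝ → ℝ} {f' g' x y : ℝ} (hf : HasDerivAt f f' x)
    (hg : HasDerivAt g g' x) (heq : f x = g x) (hlt : f' < g') (hxy : x < y) :
    ∃ z ∈ Set.Ioo x y, f z < g z := by
  have hslope : ∀ᶠ z in 𝓝[>] x, slope (g - f) x z > 0 :=
    (hasDerivWithinAt_iff_tendsto_slope' Set.self_notMem_Ioi).1 (hg.sub hf).hasDerivWithinAt
      |>.eventually (lt_mem_nhds (sub_pos.2 hlt))
  obtain ⟨z, hz, hmem⟩ := (hslope.and (Ioo_mem_nhdsGT hxy)).exists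
  rw [gt_iff_lt, slope_def_field, div_pos_iff_of_pos_right (sub_pos.2 hmem.1)] at hz
  exact ⟨z, hmem, by simpa [heq] using hz⟩

section MutualInformation

lemma sum_pushf_mul {α β : Type*} [Fintype α] [Fintype β] (p : α → ℝ) (f : α → β) (g : β → ℝ) :
    ∑ b, pushf p f b * g b = ∑ a, p a * g (f a) := by
  simp only [pushf, sum_mul]
  rw [sum_comm]
  simp

lemma entRV_eq_neg_sum {α β : Type*} [Fintype α] [Fintype β] (p : α → ℝ) (f : α → β) :
    entRV p f = -∑ a, p a * logb 2 (pushf p f (f a)) :=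
  congrArg Neg.neg (sum_pushf_mul p f fun b => logb 2 (pushf p f b))

lemma pushf_id {α : Type*} [Fintype α] (p : α → ℝ) : pushf p id = p := by
  ext; simp [pushf]

variable {A B : Type*} [Fintype A] [Fintype B] {p : A → ℝ} {W : A → B → ℝ}

lemma pushf_jointMass_fst (p : A → ℝ) (hW : ∀ a, ∑ b, W a b = 1) :
    pushf (jointMass p W) Prod.fst = p := by
  ext a
  simp only [pushf, jointMass, Fintype.sum_prod_type]
  rw [sum_comm]
  simp [← mul_sum, hW]

lemma pushf_jointMass_snd (p : A → ℝ) (W : A → B → ℝ) :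
    pushf (jointMass p W) Prod.snd = outputMass p W := by
  ext b
  simp [pushf, jointMass, outputMass, Fintype.sum_prod_type]

lemma mi_jointMass (hp : ∀ a, 0 ≤ p a) (hW : ∀ a, W a ∈ stdSimplex ℝ B) :
    mi (jointMass p W) Prod.fst Prod.snd =
      ∑ z, jointMass p W z * logb 2 (W z.1 z.2 / outputMass p W z.2) := by
  have hpair : pushf (jointMass p W) (fun z => (z.1, z.2)) = jointMass p W := pushf_id _
  simp only [mi, entRV_eq_neg_sum, pushf_jointMass_fst p fun a => (hW a).2, pushf_jointMass_snd,
    hpair, ← sum_neg_distrib, ← sum_add_distrib, ← sum_sub_distrib]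
  refine sum_congr rfl fun ⟨a, b⟩ _ => ?_
  by_cases hab : p a * W a b = 0
  · simp [jointMass, hab]
  · have hout := outputMass_pos hp (fun a => (hW a).1) hab
    simp only [jointMass]
    rw [logb_mul (left_ne_zero_of_mul hab) (right_ne_zero_of_mul hab),
      logb_div (right_ne_zero_of_mul hab) hout.ne']
    ring

lemma hasDerivAt_renyiMoment_zero (hp : ∀ a, 0 ≤ p a) (hW : ∀ a, W a ∈ stdSimplex ℝ B) :
    HasDerivAt (renyiMoment p W) (mi (jointMass p W) Prod.fst Prod.snd * log 2) 0 := by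
  have hmi : mi (jointMass p W) Prod.fst Prod.snd * log 2 =
      ∑ b, ∑ a, p a * W a b * log (W a b / outputMass p W b) := by
    rw [mi_jointMass hp hW, sum_mul, Fintype.sum_prod_type_right]
    simp [jointMass, logb, mul_assoc, div_mul_cancel₀ _ (log_pos one_lt_two).ne']
  rw [hmi]
  refine HasDerivAt.fun_sum fun b _ => HasDerivAt.fun_sum fun a _ => ?_
  by_cases hab : p a * W a b = 0
  · simp [hab, hasDerivAt_const]
  · have hratio : 0 < W a b / outputMass p W b :=
      div_pos (((hW a).1 b).lt_of_ne' (right_ne_zero_of_mul hab))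
        (outputMass_pos hp (fun a => (hW a).1) hab)
    simpa using (hasStrictDerivAt_const_rpow hratio 0).hasDerivAt.const_mul (p a * W a b)

lemma exists_renyiMoment_lt_rpow (hp : p ∈ stdSimplex ℝ A) (hW : ∀ a, W a ∈ stdSimplex ℝ B) {R : ℝ}
    (hR : mi (jointMass p W) Prod.fst Prod.snd < R) :
    ∃ s ∈ Set.Ioo (0 : ℝ) 1, renyiMoment p W s < ((2 : ℝ) ^ R) ^ s := by
  have hpow : HasDerivAt (fun s : ℝ => ((2 : ℝ) ^ R) ^ s) (R * log 2) 0 := by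
    have hbase : (0 : ℝ) < 2 ^ R := by positivity
    simpa [log_rpow] using (hasStrictDerivAt_const_rpow hbase 0).hasDerivAt
  exact exists_lt_of_hasDerivAt_lt (hasDerivAt_renyiMoment_zero hp.1 hW) hpow
    (by simp [renyiMoment_zero hp hW]) (by gcongr) one_pos

end MutualInformation

lemma TV_sq_le_triangularDisc_div_two {B : Type*} [Fintype B] {P Q : B → ℝ}
    (hP : P ∈ stdSimplex ℝ B) (hQ : Q ∈ stdSimplex ℝ B) :
    TV P Q ^ 2 ≤ triangularDisc P Q / 2 := by
  have hcauchy : (∑ b, |P b - Q b|) ^ 2 ≤ triangularDisc P Q * ∑ b, (P b + Q b) := by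
    refine sum_sq_le_sum_mul_sum_of_sq_le_mul univ
      (fun b _ => div_nonneg (sq_nonneg _) (add_nonneg (hP.1 b) (hQ.1 b)))
      (fun b _ => add_nonneg (hP.1 b) (hQ.1 b)) fun b _ => ?_
    rw [sq_abs]
    refine (div_mul_cancel_of_imp fun h => ?_).ge
    obtain ⟨hPb, hQb⟩ := (add_eq_zero_iff_of_nonneg (hP.1 b) (hQ.1 b)).1 h
    simp [hPb, hQb]
  rw [sum_add_distrib, hP.2, hQ.2] at hcauchy
  rw [TV, div_pow]
  linarith

section SampleMean

variable {A : Type*} {N : ℕ} {p f g : A → ℝ}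

lemma sampleMean_nonneg (hf : ∀ a, 0 ≤ f a) (c : Fin N → A) : 0 ≤ sampleMean f c :=
  mul_nonneg (by positivity) (sum_nonneg fun i _ => hf (c i))

variable [Fintype A]

lemma sum_piMass_mul_sampleMean (hp : ∑ a, p a = 1) (hN : 0 < N) (f : A → ℝ) :
    ∑ c : Fin N → A, piMass (fun _ => p) c * sampleMean f c = ∑ a, p a * f a := by
  simp only [sampleMean, mul_left_comm _ (1 / (N : ℝ)), ← mul_sum]
  simp only [mul_sum univ (fun _ => f _)]
  rw [sum_comm]
  simp [sum_piMass_mul_apply (fun _ => hp), hN.ne']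

lemma sum_piMass_mul_apply_mul_sampleMean_le (hp : p ∈ stdSimplex ℝ A) (hf : ∀ a, 0 ≤ f a)
    (hg : ∀ a, 0 ≤ g a) (j : Fin N) :
    ∑ c, piMass (fun _ => p) c * (g (c j) * sampleMean f c) ≤
      ∑ a, p a * (g a * (f a / N + ∑ a', p a' * f a')) := by
  have hterm (i : Fin N) : ∑ c, piMass (fun _ => p) c * (g (c j) * f (c i)) ≤
      (if i = j then ∑ a, p a * (g a * f a) else 0) + (∑ a, p a * g a) * ∑ a, p a * f a := by
    split_ifs with hij
    · rw [hij, sum_piMass_mul_apply (fun _ => hp.2) j fun a => g a * f a]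
      exact le_add_of_nonneg_right (mul_nonneg (sum_nonneg fun a _ => mul_nonneg (hp.1 a) (hg a))
        (sum_nonneg fun a _ => mul_nonneg (hp.1 a) (hf a)))
    · rw [sum_piMass_mul_apply_mul_apply (fun _ => hp.2) (Ne.symm hij), zero_add]
  have hN : (N : ℝ) ≠ 0 := Nat.cast_ne_zero.2 j.pos.ne'
  calc ∑ c, piMass (fun _ => p) c * (g (c j) * sampleMean f c)
      = 1 / N * ∑ i, ∑ c, piMass (fun _ => p) c * (g (c j) * f (c i)) := by
        rw [sum_comm, mul_sum]
        refine sum_congr rfl fun c _ => ?_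
        rw [sampleMean, ← mul_sum, ← mul_sum]
        ring
    _ ≤ 1 / N * ∑ i, ((if i = j then ∑ a, p a * (g a * f a) else 0) +
          (∑ a, p a * g a) * ∑ a, p a * f a) := by
        gcongr with i
        exact hterm i
    _ = 1 / N * (∑ a, p a * (g a * f a)) + (∑ a, p a * g a) * ∑ a, p a * f a := by
        simp only [sum_add_distrib, sum_ite_eq', mem_univ, if_true, sum_const, card_univ,
          Fintype.card_fin, nsmul_eq_mul]
        field_simp
    _ = ∑ a, p a * (g a * (f a / N + ∑ a', p a' * f a')) := by
        rw [mul_sum, sum_mul, ← sum_add_distrib]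
        exact sum_congr rfl fun a _ => by ring

lemma two_mul_sub_div_sq_le_one_div {u y : ℝ} (hu : 0 < u) (hy : 0 < y) :
    (2 * y - u) / y ^ 2 ≤ 1 / u := by
  rw [div_le_div_iff₀ (by positivity) hu]
  nlinarith [sq_nonneg (y - u)]

/- Conditionally on `c j = a`, the mean of `sampleMean f c` is at most `f a / N + E f`; Jensen's
inequality for `u ↦ 1 / u` is applied in the form of its tangent at that point. -/
lemma sum_mul_div_le_sum_piMass_mul_div (hp : p ∈ stdSimplex ℝ A) (hf : ∀ a, 0 ≤ f a) {t : ℝ}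
    (ht : 0 < t) (j : Fin N) :
    ∑ a, p a * (f a / (f a / N + ∑ a', p a' * f a' + t)) ≤
      ∑ c, piMass (fun _ => p) c * (f (c j) / (sampleMean f c + t)) := by
  set y : A → ℝ := fun a => f a / N + ∑ a', p a' * f a' + t with hy
  have hEf : 0 ≤ ∑ a, p a * f a := sum_nonneg fun a _ => mul_nonneg (hp.1 a) (hf a)
  have hy0 (a : A) : 0 < y a :=
    add_pos_of_nonneg_of_pos (add_nonneg (div_nonneg (hf a) N.cast_nonneg) hEf) ht
  have hmean := sum_piMass_mul_apply_mul_sampleMean_le hp hf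
    (fun a => div_nonneg (hf a) (sq_nonneg (y a))) j
  calc ∑ a, p a * (f a / y a)
      = ∑ a, p a * (f a / y a ^ 2 * (2 * y a - t)) -
          ∑ a, p a * (f a / y a ^ 2 * (f a / N + ∑ a', p a' * f a')) := by
        rw [← sum_sub_distrib]
        refine sum_congr rfl fun a _ => ?_
        have hya := (hy0 a).ne'
        rw [show f a / N + ∑ a', p a' * f a' = y a - t by simp [hy]]
        field_simp
        ring
    _ ≤ ∑ c, piMass (fun _ => p) c * (f (c j) / y (c j) ^ 2 * (2 * y (c j) - t)) -
          ∑ c, piMass (fun _ => p) c * (f (c j) / y (c j) ^ 2 * sampleMean f c) := by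
        rw [sum_piMass_mul_apply (fun _ => hp.2) j fun a => f a / y a ^ 2 * (2 * y a - t)]
        exact sub_le_sub_left hmean _
    _ ≤ ∑ c, piMass (fun _ => p) c * (f (c j) / (sampleMean f c + t)) := by
        rw [← sum_sub_distrib]
        refine sum_le_sum fun c _ => ?_
        have htangent := two_mul_sub_div_sq_le_one_div
          (add_pos_of_nonneg_of_pos (sampleMean_nonneg hf c) ht) (hy0 (c j))
        rw [← mul_sub]
        refine mul_le_mul_of_nonneg_left ?_ ((piMass_mem_stdSimplex fun _ => hp).1 c)
        calc _ = f (c j) * ((2 * y (c j) - (sampleMean f c + t)) / y (c j) ^ 2) := by ring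
          _ ≤ f (c j) * (1 / (sampleMean f c + t)) :=
            mul_le_mul_of_nonneg_left htangent (hf (c j))
          _ = f (c j) / (sampleMean f c + t) := mul_one_div _ _

lemma sum_mul_div_le_sum_piMass_mul_sampleMean_div (hp : p ∈ stdSimplex ℝ A) (hf : ∀ a, 0 ≤ f a)
    (hN : 0 < N) {t : ℝ} (ht : 0 < t) :
    ∑ a, p a * (f a / (f a / N + ∑ a', p a' * f a' + t)) ≤
      ∑ c : Fin N → A, piMass (fun _ => p) c * (sampleMean f c / (sampleMean f c + t)) := by
  calc ∑ a, p a * (f a / (f a / N + ∑ a', p a' * f a' + t))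
      = 1 / N * ∑ _j : Fin N, ∑ a, p a * (f a / (f a / N + ∑ a', p a' * f a' + t)) := by
        simp [hN.ne']
    _ ≤ 1 / N * ∑ j, ∑ c, piMass (fun _ => p) c * (f (c j) / (sampleMean f c + t)) := by
        gcongr with j
        exact sum_mul_div_le_sum_piMass_mul_div hp hf ht j
    _ = ∑ c : Fin N → A, piMass (fun _ => p) c * (sampleMean f c / (sampleMean f c + t)) := by
        rw [sum_comm, mul_sum]
        refine sum_congr rfl fun c _ => ?_
        rw [← mul_sum, ← sum_div, sampleMean]
        ring

lemma div_add_two_le_rpow {r s : ℝ} (hr : 0 ≤ r) (hs : s ∈ Set.Icc 0 1) : r / (r + 2) ≤ r ^ s := by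
  rcases le_total r 1 with hr1 | hr1
  · exact (div_le_self hr (by linarith)).trans (self_le_rpow_of_le_one hr hr1 hs.2)
  · exact ((div_le_one (by positivity)).2 (by linarith)).trans (one_le_rpow hr1 hs.1)

lemma sub_sq_div_add {y m : ℝ} (h : y + m ≠ 0) :
    (y - m) ^ 2 / (y + m) = y + m - 4 * m * (y / (y + m)) := by
  field_simp
  ring

lemma sum_piMass_mul_sq_sampleMean_sub_div_le (hp : p ∈ stdSimplex ℝ A) (hf : ∀ a, 0 ≤ f a)
    (hN : 0 < N) {s : ℝ} (hs : s ∈ Set.Icc 0 1) {m : ℝ} (hm : ∑ a, p a * f a = m) :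
    ∑ c : Fin N → A, piMass (fun _ => p) c * ((sampleMean f c - m) ^ 2 / (sampleMean f c + m)) ≤
      2 * ∑ a, p a * (f a * (f a / N / m) ^ s) := by
  have hm0 : 0 ≤ m := hm ▸ sum_nonneg fun a _ => mul_nonneg (hp.1 a) (hf a)
  have hmean := sum_piMass_mul_sampleMean hp.2 hN f
  rcases hm0.eq_or_lt with rfl | hmpos
  · have hrhs : 0 ≤ ∑ a, p a * (f a * (f a / N / 0) ^ s) := sum_nonneg fun a _ =>
      mul_nonneg (hp.1 a) (mul_nonneg (hf a) (by simp [rpow_nonneg]))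
    simpa [sq, hmean, hm] using hrhs
  have hratio := sum_mul_div_le_sum_piMass_mul_sampleMean_div hp hf hN hmpos
  rw [hm] at hratio
  calc ∑ c : Fin N → A, piMass (fun _ => p) c * ((sampleMean f c - m) ^ 2 / (sampleMean f c + m))
      = 2 * m - 4 * m *
          ∑ c : Fin N → A, piMass (fun _ => p) c * (sampleMean f c / (sampleMean f c + m)) := by
        simp only [fun c : Fin N → A => sub_sq_div_add
          (add_pos_of_nonneg_of_pos (sampleMean_nonneg hf c) hmpos).ne', mul_sub, mul_add,
          sum_sub_distrib, sum_add_distrib, hmean, hm, ← sum_mul,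
          (piMass_mem_stdSimplex fun _ => hp).2, mul_left_comm _ (4 * m), ← mul_sum]
        ring
    _ ≤ 2 * m - 4 * m * ∑ a, p a * (f a / (f a / N + m + m)) := by gcongr
    _ = ∑ a, (2 * (p a * f a) - 4 * m * (p a * (f a / (f a / N + m + m)))) := by
        rw [sum_sub_distrib, ← mul_sum, ← mul_sum, hm]
    _ = 2 * ∑ a, p a * (f a * (f a / N / m / (f a / N / m + 2))) := by
        rw [mul_sum]
        refine sum_congr rfl fun a _ => ?_
        have hx : 0 ≤ f a / N := div_nonneg (hf a) N.cast_nonneg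
        generalize f a / N = x at hx
        field_simp
        ring
    _ ≤ 2 * ∑ a, p a * (f a * (f a / N / m) ^ s) := by
        gcongr with a
        · exact hp.1 a
        · exact hf a
        · exact div_add_two_le_rpow (by have := hf a; positivity) hs

end SampleMean

section Codebook

variable {A B : Type*} [Fintype B] {W : A → B → ℝ} {N : ℕ}

lemma codebookMass_mem_stdSimplex (hW : ∀ a, W a ∈ stdSimplex ℝ B) (hN : 0 < N) (c : Fin N → A) :
    codebookMass W c ∈ stdSimplex ℝ B := by
  refine ⟨fun b => mul_nonneg (by positivity) (sum_nonneg fun i _ => (hW _).1 b), ?_⟩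
  simp only [codebookMass, sampleMean, ← mul_sum]
  rw [sum_comm]
  simp [(hW _).2, hN.ne']

variable [Fintype A] {p : A → ℝ}

lemma sum_piMass_mul_triangularDisc_le (hp : p ∈ stdSimplex ℝ A) (hW : ∀ a b, 0 ≤ W a b)
    (hN : 0 < N) {s : ℝ} (hs : s ∈ Set.Icc 0 1) :
    ∑ c : Fin N → A, piMass (fun _ => p) c * triangularDisc (codebookMass W c) (outputMass p W) ≤
      2 * (renyiMoment p W s / N ^ s) := by
  calc ∑ c : Fin N → A, piMass (fun _ => p) c * triangularDisc (codebookMass W c) (outputMass p W)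
      = ∑ b, ∑ c : Fin N → A, piMass (fun _ => p) c *
          ((sampleMean (W · b) c - outputMass p W b) ^ 2 /
            (sampleMean (W · b) c + outputMass p W b)) := by
        simp only [triangularDisc, mul_sum]
        exact sum_comm
    _ ≤ ∑ b, 2 * ∑ a, p a * (W a b * (W a b / N / outputMass p W b) ^ s) := by
        gcongr with b
        exact sum_piMass_mul_sq_sampleMean_sub_div_le hp (fun a => hW a b) hN hs rfl
    _ = 2 * (renyiMoment p W s / N ^ s) := by
        simp only [renyiMoment, ← mul_sum, sum_div]
        congr! 3 with b _ a
        rw [div_right_comm, div_rpow (div_nonneg (hW a b) (outputMass_nonneg hp.1 hW b))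
          N.cast_nonneg]
        ring

theorem sum_piMass_mul_TV_codebookMass_le (hp : p ∈ stdSimplex ℝ A)
    (hW : ∀ a, W a ∈ stdSimplex ℝ B) (hN : 0 < N) {s : ℝ} (hs : s ∈ Set.Icc 0 1) :
    ∑ c : Fin N → A, piMass (fun _ => p) c * TV (codebookMass W c) (outputMass p W) ≤
      √(renyiMoment p W s / N ^ s) := by
  have hlaw := piMass_mem_stdSimplex fun _ : Fin N => hp
  refine le_sqrt_of_sq_le ?_
  calc (∑ c : Fin N → A, piMass (fun _ => p) c * TV (codebookMass W c) (outputMass p W)) ^ 2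
      ≤ ∑ c : Fin N → A, piMass (fun _ => p) c * TV (codebookMass W c) (outputMass p W) ^ 2 :=
        pow_arith_mean_le_arith_mean_pow_of_even univ _ _ (fun c _ => hlaw.1 c) hlaw.2 even_two
    _ ≤ ∑ c : Fin N → A, piMass (fun _ => p) c *
          (triangularDisc (codebookMass W c) (outputMass p W) / 2) := by
        gcongr with c
        · exact hlaw.1 c
        · exact TV_sq_le_triangularDisc_div_two (codebookMass_mem_stdSimplex hW hN c)
            (outputMass_mem_stdSimplex hp hW)
    _ ≤ renyiMoment p W s / N ^ s := by
        simp only [← mul_div_assoc, ← sum_div]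
        linarith [sum_piMass_mul_triangularDisc_le hp (fun a => (hW a).1) hN hs]

theorem sum_piMass_mul_TV_codebookMass_piChannel_le (hp : p ∈ stdSimplex ℝ A)
    (hW : ∀ a, W a ∈ stdSimplex ℝ B) {s : ℝ} (hs : s ∈ Set.Icc 0 1) {R : ℝ} {n : ℕ}
    (hN : (2 : ℝ) ^ (n * R) ≤ N) :
    ∑ c : Fin N → Fin n → A, piMass (fun _ => piMass fun _ => p) c *
        TV (codebookMass (piChannel fun _ => W) c) (piMass fun _ => outputMass p W) ≤
      √(renyiMoment p W s / (2 ^ R) ^ s) ^ n := by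
  have hNpos : 0 < N := Nat.cast_pos.1 ((by positivity : (0 : ℝ) < 2 ^ (n * R)).trans_le hN)
  have hmoment := renyiMoment_nonneg hp.1 (fun a => (hW a).1) s
  have hNs : (((2 : ℝ) ^ R) ^ s) ^ n ≤ (N : ℝ) ^ s := by
    calc (((2 : ℝ) ^ R) ^ s) ^ n = ((2 : ℝ) ^ (n * R)) ^ s := by
          simp only [← rpow_natCast, ← rpow_mul (zero_le_two : (0 : ℝ) ≤ 2)]
          ring_nf
      _ ≤ (N : ℝ) ^ s := rpow_le_rpow (by positivity) hN hs.1
  calc _ ≤ √(renyiMoment (piMass fun _ : Fin n => p) (piChannel fun _ => W) s / N ^ s) := by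
        rw [← outputMass_piChannel]
        exact sum_piMass_mul_TV_codebookMass_le (piMass_mem_stdSimplex fun _ => hp)
          (fun a => piMass_mem_stdSimplex fun t => hW (a t)) hNpos hs
    _ = √(renyiMoment p W s ^ n / N ^ s) := by
        rw [renyiMoment_piChannel (fun _ => hp.1) fun _ a => (hW a).1]
        simp
    _ ≤ √((renyiMoment p W s / (2 ^ R) ^ s) ^ n) := by
        rw [div_pow]
        gcongr
    _ = √(renyiMoment p W s / (2 ^ R) ^ s) ^ n := by
        rw [sqrt_eq_iff_eq_sq (by positivity) (by positivity), ← pow_mul, mul_comm n, pow_mul,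
          sq_sqrt (by positivity)]

end Codebook

theorem soft_covering_expectation_general {U X : Type*} [Fintype U] [Fintype X] {PU : U → ℝ}
    {W : U → X → ℝ} (hPU : PU ∈ stdSimplex ℝ U) (hW : ∀ u, W u ∈ stdSimplex ℝ X) {R : ℝ}
    (hR : mi (jointMass PU W) Prod.fst Prod.snd < R) :
    ∃ σ > (0 : ℝ), ∀ n N : ℕ, (2 : ℝ) ^ (n * R) ≤ N →
      ∑ c : Fin N → Fin n → U, piMass (fun _ => piMass fun _ => PU) c *
          TV (codebookMass (piChannel fun _ => W) c) (piMass fun _ => outputMass PU W) ≤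
        exp (-n * σ) := by
  obtain ⟨s, hs, hlt⟩ := exists_renyiMoment_lt_rpow hPU hW hR
  obtain ⟨ρ, hlow, hρ1⟩ := exists_between ((div_lt_one (by positivity)).2 hlt)
  have hρ0 : 0 < ρ := lt_of_le_of_lt
    (div_nonneg (renyiMoment_nonneg hPU.1 (fun u => (hW u).1) s) (by positivity)) hlow
  refine ⟨-log √ρ, neg_pos.2 (log_neg (sqrt_pos.2 hρ0) ((sqrt_lt' one_pos).2 (by simpa))), ?_⟩
  intro n N hN
  calc _ ≤ √(renyiMoment PU W s / (2 ^ R) ^ s) ^ n :=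
        sum_piMass_mul_TV_codebookMass_piChannel_le hPU hW (Set.Ioo_subset_Icc_self hs) hN
    _ ≤ √ρ ^ n := by gcongr
    _ = exp (-n * -log √ρ) := by rw [neg_mul_neg, exp_nat_mul, exp_log (sqrt_pos.2 hρ0)]

/-- **Soft-covering lemma (expectation version).**  Let `P_U` be a pmf on a finite set
`U` and `W = W_{X|U}` a conditional pmf with output marginal `P_X`.  For each `n`, draw
a random codebook of `N_n = ⌈2^{nR}⌉` codewords i.i.d. from `P_U^{⊗n}` and let
`P̂_{Xⁿ}` be the induced output pmf.  If `R > I(U;X)`, then there is `σ > 0` such that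
for all sufficiently large `n`, `E[V(P̂_{Xⁿ}, P_X^{⊗n})] ≤ e^{−nσ}`. -/
theorem soft_covering_expectation
    {U X : Type*} [Fintype U] [Fintype X]
    (PU : U → ℝ) (W : U → X → ℝ)
    (hPU0 : ∀ u, 0 ≤ PU u) (hPU1 : ∑ u, PU u = 1)
    (hW0 : ∀ u x, 0 ≤ W u x) (hW1 : ∀ u, ∑ x, W u x = 1)
    (R : ℝ)
    (hR : R > mi (fun z : U × X => PU z.1 * W z.1 z.2) Prod.fst Prod.snd) :
    ∃ σ > (0 : ℝ), ∀ᶠ n : ℕ in atTop,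
      (∑ c : Fin (⌈(2 : ℝ) ^ ((n : ℝ) * R)⌉₊) → Fin n → U,
        (∏ i, ∏ t, PU (c i t)) *
          TV (fun xn : Fin n → X =>
                (1 / ((⌈(2 : ℝ) ^ ((n : ℝ) * R)⌉₊ : ℕ) : ℝ)) *
                  ∑ i, ∏ t, W (c i t) (xn t))
             (fun xn : Fin n → X => ∏ t, ∑ u, PU u * W u (xn t)))
        ≤ Real.exp (-(n : ℝ) * σ) := by
  obtain ⟨σ, hσ, hle⟩ := soft_covering_expectation_general ⟨hPU0, hPU1⟩ (fun u => ⟨hW0 u, hW1 u⟩) hR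
  exact ⟨σ, hσ, .of_forall fun n => hle n _ (Nat.le_ceil _)⟩
end
end
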